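/- For every influence I, every k ∈ ℕ, every local state x ∈ X, every d ∈ D, and every action a ∈ A: Q^I_k((x,d),a) ≤ Q̂_k(x,a). That is, the influence-optimistic Q-MMDP values pointwise dominate the Q-MMDP values of the influence-augmented sub-problem for any influence. -/

import Mathlib

open Finset

section QMMDP

variable {Xl Xn A U D : Type*}
  [Fintype Xl] [Nonempty Xl] [Fintype Xn] [Nonempty Xn]
  [Fintype A] [Nonempty A] [Fintype U] [Nonempty U] [Fintype D] [Nonempty D]

/-- Influence-optimistic Q-MMDP values `Q̂_k(x,a)`. -/
noncomputable def Qhat (Pl : Xl → (Xl × Xn) → A → ℝ) (Pn : Xn → (Xl × Xn) → A → U → ℝ)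
    (R : (Xl × Xn) → A → (Xl × Xn) → ℝ) :
    ℕ → (Xl × Xn) → A → ℝ
  | 0 => fun _ _ => 0
  | k + 1 => fun x a =>
      Finset.univ.sup' Finset.univ_nonempty (fun u : U =>
        ∑ x' : Xl × Xn, Pl x'.1 x a * Pn x'.2 x a u *
          (R x a x' +
            Finset.univ.sup' Finset.univ_nonempty (fun a' : A => Qhat Pl Pn R k x' a')))

/-- Influence-induced Q-MMDP values `Q^I_k((x,d),a)` of the influence-augmented
sub-problem, for an influence `I`. -/
noncomputable def QI (Pl : Xl → (Xl × Xn) → A → ℝ) (Pn : Xn → (Xl × Xn) → A → U → ℝ)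
    (δ : (Xl × Xn) → D → A → (Xl × Xn) → D) (R : (Xl × Xn) → A → (Xl × Xn) → ℝ)
    (I : D → U → ℝ) :
    ℕ → (Xl × Xn) → D → A → ℝ
  | 0 => fun _ _ _ => 0
  | k + 1 => fun x d a =>
      ∑ x' : Xl × Xn, Pl x'.1 x a * (∑ u : U, Pn x'.2 x a u * I d u) *
        (R x a x' +
          Finset.univ.sup' Finset.univ_nonempty (fun a' : A =>
            QI Pl Pn δ R I k x' (δ x d a x') a'))

end QMMDP

section QMMDP

variable {Xl Xn A U D : Type*}
  [Fintype Xl] [Nonempty Xl] [Fintype Xn] [Nonempty Xn]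
  [Fintype A] [Nonempty A] [Fintype U] [Nonempty U] [Fintype D] [Nonempty D]

/-!
Marginalising out the influence source makes `Q^I_{k+1}((x,d),a)` the average, with weights
`I(·|d)`, of the one-step lookahead values for each fixed influence-source value `u`. An average is
at most the maximum over `u`, and the lookahead is monotone in the continuation values, so the
domination at horizon `k` propagates to horizon `k + 1`, whatever the d-set is updated to.
-/

section Lookahead

variable {ι S : Type*} [Fintype S]

/-- One-step lookahead value: the expectation, under the next-state weights `p`, of the reward `r`
plus the continuation value `v`. The weights are not normalised. -/
def lookahead (p r v : S → ℝ) : ℝ :=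
  ∑ s, p s * (r s + v s)

lemma lookahead_mono {p v w : S → ℝ} (hp : 0 ≤ p) (hvw : v ≤ w) (r : S → ℝ) :
    lookahead p r v ≤ lookahead p r w :=
  sum_le_sum fun s _ => mul_le_mul_of_nonneg_left (add_le_add_right (hvw s) (r s)) (hp s)

lemma lookahead_sum_smul (t : Finset ι) (c : ι → ℝ) (p : ι → S → ℝ) (r v : S → ℝ) :
    lookahead (∑ i ∈ t, c i • p i) r v = ∑ i ∈ t, c i • lookahead (p i) r v := by
  simp only [lookahead, Finset.sum_apply, Pi.smul_apply, smul_eq_mul, sum_mul, mul_sum, mul_assoc]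
  exact sum_comm

lemma lookahead_sum_smul_le_sup' {t : Finset ι} (ht : t.Nonempty) {c : ι → ℝ}
    (hc0 : ∀ i ∈ t, 0 ≤ c i) (hc1 : ∑ i ∈ t, c i = 1) (p : ι → S → ℝ) (r v : S → ℝ) :
    lookahead (∑ i ∈ t, c i • p i) r v ≤ t.sup' ht fun i => lookahead (p i) r v := by
  rw [lookahead_sum_smul, ← t.centerMass_eq_of_sum_1 _ hc1]
  exact centerMass_le_sup hc0 (hc1 ▸ one_pos)

end Lookahead

/-- The local transition kernel `Pl(x'l|x,a) · Pn(x'n|x,a,u)` with the influence-source value `u`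
held fixed, as a function of the next local state `x' = (x'l,x'n)`. -/
def localKernel (Pl : Xl → (Xl × Xn) → A → ℝ) (Pn : Xn → (Xl × Xn) → A → U → ℝ)
    (x : Xl × Xn) (a : A) (u : U) : Xl × Xn → ℝ :=
  fun x' => Pl x'.1 x a * Pn x'.2 x a u

section General

omit [Nonempty Xl] [Nonempty Xn] [Fintype D] [Nonempty D]

lemma Qhat_succ (Pl : Xl → (Xl × Xn) → A → ℝ) (Pn : Xn → (Xl × Xn) → A → U → ℝ)
    (R : (Xl × Xn) → A → (Xl × Xn) → ℝ) (k : ℕ) (x : Xl × Xn) (a : A) :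
    Qhat Pl Pn R (k + 1) x a =
      univ.sup' univ_nonempty fun u => lookahead (localKernel Pl Pn x a u) (R x a)
        fun x' => univ.sup' univ_nonempty (Qhat Pl Pn R k x') :=
  rfl

omit [Nonempty U] in
lemma QI_succ (Pl : Xl → (Xl × Xn) → A → ℝ) (Pn : Xn → (Xl × Xn) → A → U → ℝ)
    (δ : (Xl × Xn) → D → A → (Xl × Xn) → D) (R : (Xl × Xn) → A → (Xl × Xn) → ℝ)
    (I : D → U → ℝ) (k : ℕ) (x : Xl × Xn) (d : D) (a : A) :
    QI Pl Pn δ R I (k + 1) x d a =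
      lookahead (∑ u, I d u • localKernel Pl Pn x a u) (R x a)
        fun x' => univ.sup' univ_nonempty (QI Pl Pn δ R I k x' (δ x d a x')) := by
  have marginal_kernel (x' : Xl × Xn) :
      Pl x'.1 x a * ∑ u, Pn x'.2 x a u * I d u = (∑ u, I d u • localKernel Pl Pn x a u) x' := by
    simp only [localKernel, Finset.sum_apply, Pi.smul_apply, smul_eq_mul, mul_sum]
    exact sum_congr rfl fun u _ => by ring
  simp only [QI, lookahead, marginal_kernel]

theorem QI_le_Qhat_general
    (Pl : Xl → (Xl × Xn) → A → ℝ) (Pn : Xn → (Xl × Xn) → A → U → ℝ)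
    (δ : (Xl × Xn) → D → A → (Xl × Xn) → D) (R : (Xl × Xn) → A → (Xl × Xn) → ℝ)
    (hPl0 : ∀ x'l x a, 0 ≤ Pl x'l x a) (hPn0 : ∀ x'n x a u, 0 ≤ Pn x'n x a u)
    (I : D → U → ℝ) (hI0 : ∀ d u, 0 ≤ I d u) (hI1 : ∀ d, ∑ u : U, I d u = 1)
    (k : ℕ) (x : Xl × Xn) (d : D) (a : A) :
    QI Pl Pn δ R I k x d a ≤ Qhat Pl Pn R k x a := by
  induction k generalizing x d a with
  | zero => exact le_rfl
  | succ k ih =>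
    have kernel_nonneg (u : U) : 0 ≤ localKernel Pl Pn x a u :=
      fun x' => mul_nonneg (hPl0 x'.1 x a) (hPn0 x'.2 x a u)
    have value_le (x' : Xl × Xn) :
        univ.sup' univ_nonempty (QI Pl Pn δ R I k x' (δ x d a x')) ≤
          univ.sup' univ_nonempty (Qhat Pl Pn R k x') :=
      sup'_mono_fun fun a' _ => ih x' (δ x d a x') a'
    rw [QI_succ, Qhat_succ]
    exact (lookahead_sum_smul_le_sup' univ_nonempty (fun u _ => hI0 d u) (hI1 d) _ _ _).trans
      (sup'_mono_fun fun u _ => lookahead_mono (kernel_nonneg u) value_le (R x a))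

end General

/-- the influence-optimistic Q-MMDP values pointwise dominate the Q-MMDP
values of the influence-augmented sub-problem for any influence. -/
theorem QI_le_Qhat
    (Pl : Xl → (Xl × Xn) → A → ℝ) (Pn : Xn → (Xl × Xn) → A → U → ℝ)
    (δ : (Xl × Xn) → D → A → (Xl × Xn) → D) (R : (Xl × Xn) → A → (Xl × Xn) → ℝ)
    (hPl0 : ∀ x'l x a, 0 ≤ Pl x'l x a) (hPl1 : ∀ x a, ∑ x'l : Xl, Pl x'l x a = 1)
    (hPn0 : ∀ x'n x a u, 0 ≤ Pn x'n x a u) (hPn1 : ∀ x a u, ∑ x'n : Xn, Pn x'n x a u = 1)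
    (I : D → U → ℝ) (hI0 : ∀ d u, 0 ≤ I d u) (hI1 : ∀ d, ∑ u : U, I d u = 1)
    (k : ℕ) (x : Xl × Xn) (d : D) (a : A) :
    QI Pl Pn δ R I k x d a ≤ Qhat Pl Pn R k x a :=
  QI_le_Qhat_general Pl Pn δ R hPl0 hPn0 I hI0 hI1 k x d a

end QMMDP
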